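/- In any lattice L with a strictly isotone and submodular function r : L → ℝ, the function d'(x, y) := r(x ⊔ y) − min(r(x), r(y)) is a metric on L. -/

import Mathlib

/-- In any lattice `L` with a strictly isotone and submodular function `r : L → ℝ`,
`d'(x, y) := r(x ⊔ y) − min (r x) (r y)` is a metric. -/
theorem matroid_lattice_metric' {L : Type*} [Lattice L] (r : L → ℝ)
    (hmono : ∀ x y : L, x < y → r x < r y)
    (hsub : ∀ x y : L, r (x ⊔ y) + r (x ⊓ y) ≤ r x + r y) :
    (∀ x y : L, 0 ≤ r (x ⊔ y) - min (r x) (r y)) ∧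
    (∀ x y : L, r (x ⊔ y) - min (r x) (r y) = 0 ↔ x = y) ∧
    (∀ x y : L, r (x ⊔ y) - min (r x) (r y) = r (y ⊔ x) - min (r y) (r x)) ∧
    (∀ x t y : L, r (x ⊔ y) - min (r x) (r y) ≤
      (r (x ⊔ t) - min (r x) (r t)) + (r (t ⊔ y) - min (r t) (r y))) := by
  have hle : Monotone r := StrictMono.monotone fun x y h => hmono x y h
  refine ⟨fun x y => ?_, fun x y => ⟨fun h => ?_, ?_⟩, fun x y => ?_, fun x t y => ?_⟩
  · exact sub_nonneg.2 ((min_le_left _ _).trans (hle le_sup_left))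
  · have hx : x = x ⊔ y := eq_of_le_of_not_lt le_sup_left fun hlt => by
      linarith [hmono _ _ hlt, min_le_left (r x) (r y)]
    have hy : y = x ⊔ y := eq_of_le_of_not_lt le_sup_right fun hlt => by
      linarith [hmono _ _ hlt, min_le_right (r x) (r y)]
    exact hx.trans hy.symm
  · rintro rfl
    simp
  · rw [sup_comm, min_comm]
  · have hsup : r (x ⊔ y) ≤ r ((x ⊔ t) ⊔ (t ⊔ y)) :=
      hle (sup_le_sup le_sup_left le_sup_right)
    have hinf : r t ≤ r ((x ⊔ t) ⊓ (t ⊔ y)) := hle (le_inf le_sup_right le_sup_left)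
    have hmin : min (r x) (r t) + min (r t) (r y) ≤ r t + min (r x) (r y) := by
      grind
    linarith [hsub (x ⊔ t) (t ⊔ y)]
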